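/- The sequence (n/ln n)·(B_n/E_n^* − 1) converges to −1/12 as n → ∞. -/

import Mathlib

/-- Principal branch of the Lambert W function on `[0, ∞)`: for `x ≥ 0`,
`lambertW x` is the unique `y ≥ 0` with `y * exp y = x`. -/
noncomputable def lambertW (x : ℝ) : ℝ := Function.invFun (fun y : ℝ => y * Real.exp y) x

/-- Bell numbers: `Bell 0 = 1` and `Bell (n+1) = ∑_{k=0}^{n} C(n,k) * Bell k`. -/
def Bell : ℕ → ℕ
  | 0 => 1
  | n + 1 => ∑ k ∈ (Finset.range (n + 1)).attach, (n.choose k.1) * Bell k.1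
decreasing_by exact Finset.mem_range.mp k.2

/-- `E* n = exp(e^{W(n)} + n W(n) - (n+1)) / sqrt(1 + W(n))`. -/
noncomputable def Estar (n : ℕ) : ℝ :=
  Real.exp (Real.exp (lambertW n) + n * lambertW n - (n + 1)) / Real.sqrt (1 + lambertW n)

/-!
The exponential generating function of the Bell numbers is `exp (eᶻ - 1)`, so Cauchy's formula on
the circle of radius `r` gives `2π rⁿ Bₙ / n! = ∫ exp (exp (r e^{iθ}) - 1 - inθ) dθ`, and for
`r = W(n)`, i.e. `r eʳ = n`, the exponent is stationary at `θ = 0`. Expand it there: the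
`θ`-derivatives of `exp (r e^{iθ})` at `0` are `iᵏ Tₖ(r) eʳ` with `Tₖ` the Touchard polynomials,
which are monic of degree `k`. After the rescaling `θ = t / σ` with `σ² = r (r + 1) eʳ` the exponent
becomes, for large `r`, `-t²/2 - i e^{-r/2} t³/6 + e^{-r} t⁴/24 + ⋯`, so the real part of the
integrand is `e^{-t²/2} (1 + e^{-r} (t⁴/24 - t⁶/72) + ⋯)`. The Gaussian moments `3` and `15` turn
the correction into the relative error `(3/24 - 15/72) e^{-r} = -e^{-r} / 12`. Finally
`n e^{-r} = W(n) ∼ log n`, while Stirling's approximation of `n!` only contributes a relative error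
`O(1/n)`, which is negligible against `log n / n`.
-/

open Complex Filter MeasureTheory Polynomial Set Topology
open scoped Nat Real

theorem norm_sub_taylor_sum_le {E : Type*} [NormedAddCommGroup E] [NormedSpace ℝ E]
    {f : ℝ → E} {n : ℕ} {C : ℝ} (hf : ContDiff ℝ n f) (hC : ∀ y, ‖iteratedDeriv n f y‖ ≤ C)
    (x₀ x : ℝ) :
    ‖f x - ∑ j ∈ Finset.range n, ((x - x₀) ^ j / j !) • iteratedDeriv j f x₀‖
      ≤ C * |x - x₀| ^ n := by
  induction n generalizing f x with
  | zero => simpa using hC x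
  | succ n ih =>
    have hderiv : ∀ y, ‖deriv f y - ∑ j ∈ Finset.range n,
        ((y - x₀) ^ j / j !) • iteratedDeriv (j + 1) f x₀‖ ≤ C * |y - x₀| ^ n := by
      simp only [iteratedDeriv_succ'] at hC ⊢
      exact ih (contDiff_succ_iff_deriv.1 (mod_cast hf)).2.2 hC
    have hasDerivAt_term (j : ℕ) (y : ℝ) :
        HasDerivAt (fun y => (y - x₀) ^ (j + 1) / (j + 1)!) ((y - x₀) ^ j / j !) y := by
      convert! (((hasDerivAt_id y).sub_const x₀).fun_pow (j + 1)).div_const ((j + 1)! : ℝ) using 1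
      rw [Nat.factorial_succ]
      push_cast
      simp only [id]
      field_simp
    have hasDerivAt_sub (y : ℝ) : HasDerivAt
        (fun y => f y - ∑ j ∈ Finset.range (n + 1), ((y - x₀) ^ j / j !) • iteratedDeriv j f x₀)
        (deriv f y - ∑ j ∈ Finset.range n, ((y - x₀) ^ j / j !) • iteratedDeriv (j + 1) f x₀)
        y := by
      simp only [Finset.sum_range_succ', pow_zero]
      exact (hf.differentiable (by simp) y).hasDerivAt.sub
        ((HasDerivAt.fun_sum fun j _ => (hasDerivAt_term j y).smul_const _).add_const _)
    have hC₀ : 0 ≤ C := (norm_nonneg _).trans (hC x)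
    have mean_value := (convex_uIcc x₀ x).norm_image_sub_le_of_norm_hasDerivWithin_le
      (C := C * |x - x₀| ^ n) (fun y _ => (hasDerivAt_sub y).hasDerivWithinAt)
      (fun y hy => (hderiv y).trans (by gcongr C * ?_ ^ n; exact abs_sub_left_of_mem_uIcc hy))
      left_mem_uIcc right_mem_uIcc
    simpa [Finset.sum_range_succ', pow_succ, mul_assoc] using mean_value

theorem integral_cexp_neg_smul_circleMap {E : Type*} [NormedAddCommGroup E] [NormedSpace ℂ E]
    [CompleteSpace E] {f : ℂ → E} {r : ℝ} (hr : 0 < r)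
    (hf : DiffContOnCl ℂ f (Metric.ball 0 r)) (n : ℕ) :
    ∫ θ in -π..π, cexp (-(n * θ * I)) • f (circleMap 0 r θ)
      = (2 * π * r ^ n / n ! : ℂ) • iteratedDeriv n f 0 := by
  have hr' : (r : ℂ) ≠ 0 := ofReal_ne_zero.2 hr.ne'
  have hexp (θ : ℝ) : cexp (-(n * θ * I)) = (r / circleMap 0 r θ) ^ n := by
    rw [circleMap_zero, ← div_div, div_self hr', one_div, ← Complex.exp_neg, ← Complex.exp_nat_mul]
    congr 1; ring
  have hperiodic : Function.Periodic
      (fun θ : ℝ => cexp (-(n * θ * I)) • f (circleMap 0 r θ)) (2 * π) := fun θ => by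
    simp only [hexp, periodic_circleMap 0 r θ]
  have hcircle (θ : ℝ) : deriv (circleMap 0 r) θ • (1 / (circleMap 0 r θ - 0) ^ (n + 1)) •
      f (circleMap 0 r θ) = (I / r ^ n) • cexp (-(n * θ * I)) • f (circleMap 0 r θ) := by
    have hz : circleMap 0 r θ ≠ 0 := circleMap_ne_center hr.ne'
    rw [deriv_circleMap, hexp, sub_zero, smul_smul, smul_smul, div_pow]
    congr 1
    field_simp
    ring
  have hcauchy := hf.circleIntegral_one_div_sub_center_pow_smul hr n
  simp only [circleIntegral, hcircle, intervalIntegral.integral_smul] at hcauchy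
  have hshift := hperiodic.intervalIntegral_add_eq (-π) 0
  rw [show -π + 2 * π = π by ring, zero_add] at hshift
  rw [hshift]
  refine smul_right_injective E (div_ne_zero I_ne_zero (pow_ne_zero n hr')) (hcauchy.trans ?_)
  simp only [smul_smul]
  congr 1
  field_simp

section Exponential

theorem abs_re_cexp_sub_one_le (z : ℂ) :
    |(cexp z - 1).re| ≤ |z.re| + ‖z‖ ^ 2 * rexp ‖z‖ := by
  have h := norm_exp_sub_sum_le_norm_mul_exp z 2
  simp only [Finset.sum_range_succ, Finset.sum_range_zero, pow_zero, pow_one, Nat.factorial_zero,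
    Nat.factorial_one, Nat.cast_one, div_one, zero_add] at h
  calc |(cexp z - 1).re| = |z.re + (cexp z - (1 + z)).re| := by
        congr 1; simp only [sub_re, add_re, one_re]; ring
    _ ≤ |z.re| + |(cexp z - (1 + z)).re| := abs_add_le _ _
    _ ≤ |z.re| + ‖z‖ ^ 2 * rexp ‖z‖ := by gcongr; exact (abs_re_le_norm _).trans h

theorem tendsto_sq_mul_re_cexp_sub_one {ι : Type*} {l : Filter ι} {M : ι → ℝ} {z : ι → ℂ}
    {a : ℝ} {b : ℂ} (hM : Tendsto M l atTop) (hre : Tendsto (fun i => M i ^ 2 * (z i).re) l (𝓝 a))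
    (hz : Tendsto (fun i => M i * z i) l (𝓝 b)) :
    Tendsto (fun i => M i ^ 2 * (cexp (z i) - 1).re) l (𝓝 (a + (b ^ 2 / 2).re)) := by
  have hz₀ : Tendsto z l (𝓝 0) := by
    have h := (continuous_ofReal.tendsto _).comp hM.inv_tendsto_atTop |>.mul hz
    rw [ofReal_zero, zero_mul] at h
    refine h.congr' ?_
    filter_upwards [hM.eventually_gt_atTop 0] with i hi
    simp [inv_mul_cancel_left₀ (ofReal_ne_zero.2 hi.ne')]
  have cubic_remainder : Tendsto
      (fun i => (M i : ℂ) ^ 2 * (cexp (z i) - (1 + z i + z i ^ 2 / 2))) l (𝓝 0) := by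
    have bound : Tendsto (fun i => ‖M i * z i‖ ^ 2 * (‖z i‖ * rexp ‖z i‖)) l (𝓝 0) := by
      simpa using (hz.norm.pow 2).mul (hz₀.norm.mul hz₀.norm.rexp)
    refine squeeze_zero_norm (fun i => ?_) bound
    have h := norm_exp_sub_sum_le_norm_mul_exp (z i) 3
    simp only [Finset.sum_range_succ, Finset.sum_range_zero, pow_zero, pow_one,
      Nat.factorial_zero, Nat.factorial_one, Nat.factorial_two, Nat.cast_one, Nat.cast_ofNat,
      div_one, zero_add] at h
    calc _ = ‖(M i : ℂ)‖ ^ 2 * ‖cexp (z i) - (1 + z i + z i ^ 2 / 2)‖ := by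
          rw [norm_mul, norm_pow]
      _ ≤ ‖(M i : ℂ)‖ ^ 2 * (‖z i‖ ^ 3 * rexp ‖z i‖) := by gcongr
      _ = ‖M i * z i‖ ^ 2 * (‖z i‖ * rexp ‖z i‖) := by rw [norm_mul]; ring
  have quadratic := (continuous_re.tendsto _).comp (cubic_remainder.add ((hz.pow 2).div_const 2))
  rw [zero_add] at quadratic
  refine (hre.add quadratic).congr fun i => ?_
  have : (M i : ℂ) ^ 2 * (cexp (z i) - (1 + z i + z i ^ 2 / 2)) + (M i * z i) ^ 2 / 2
      = ((M i ^ 2 : ℝ) : ℂ) * (cexp (z i) - 1 - z i) := by push_cast; ring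
  simp only [Function.comp_apply, this, re_ofReal_mul, sub_re]
  ring

theorem eventually_exp_mul_exp_neg_mul_le_one {c K : ℝ} (hc : 0 < c) (hK : 0 ≤ K) :
    ∀ᶠ r : ℝ in atTop,
      rexp r * rexp (-(c * rexp r / r)) * (1 + K * r ^ 2 * rexp r) ≤ 1 := by
  have decay := (Real.tendsto_pow_mul_exp_neg_atTop_nhds_zero 5).const_mul (6 * (1 + K) / c ^ 3)
  rw [mul_zero] at decay
  filter_upwards [decay.eventually_le_const one_pos, eventually_ge_atTop 1] with r hdecay hr
  have hr₀ : 0 < r := by linarith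
  have cubic_bound : rexp (-(c * rexp r / r)) ≤ 6 / (c * rexp r / r) ^ 3 := by
    have h := Real.pow_div_factorial_le_exp (c * rexp r / r) (by positivity) 3
    rw [Real.exp_neg, inv_le_comm₀ (Real.exp_pos _) (by positivity), inv_div]
    simpa [Nat.factorial] using h
  have absorb_one : 1 + K * r ^ 2 * rexp r ≤ (1 + K) * r ^ 2 * rexp r := by
    have : 1 ≤ r ^ 2 * rexp r :=
      one_le_mul_of_one_le_of_one_le (one_le_pow₀ hr) (Real.one_le_exp hr₀.le)
    linarith
  calc rexp r * rexp (-(c * rexp r / r)) * (1 + K * r ^ 2 * rexp r)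
      ≤ rexp r * (6 / (c * rexp r / r) ^ 3) * ((1 + K) * r ^ 2 * rexp r) := by gcongr
    _ = 6 * (1 + K) / c ^ 3 * (r ^ 5 * rexp (-r)) := by rw [Real.exp_neg]; field_simp
    _ ≤ 1 := hdecay

end Exponential

section Gaussian

theorem integral_pow_two_mul_mul_exp_neg_mul_sq {b : ℝ} (hb : 0 < b) (k : ℕ) :
    ∫ x : ℝ, x ^ (2 * k) * rexp (-b * x ^ 2) = (2 * k - 1)‼ / (2 * b) ^ k * √(π / b) := by
  have half_line : ∫ x in Ioi (0 : ℝ), x ^ (2 * k) * rexp (-b * x ^ 2)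
      = b ^ (-((k : ℝ) + 1 / 2)) * (1 / 2) * Real.Gamma (k + 1 / 2) := by
    have h := integral_rpow_mul_exp_neg_mul_rpow (p := 2) (q := (2 * k : ℕ)) two_pos
      (by linarith [(2 * k : ℕ).cast_nonneg (α := ℝ)]) hb
    simp only [Real.rpow_natCast, Real.rpow_two] at h
    rw [h]
    congr 2 <;> · push_cast; ring_nf
  have even := integral_comp_abs (f := fun x : ℝ => x ^ (2 * k) * rexp (-b * x ^ 2))
  simp only [pow_mul, sq_abs] at even half_line ⊢
  rw [even, half_line, Real.Gamma_nat_add_half, Real.rpow_neg hb.le, Real.rpow_add hb,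
    Real.rpow_natCast, ← Real.sqrt_eq_rpow, Real.sqrt_div Real.pi_nonneg, mul_pow]
  field_simp

theorem integrable_pow_mul_exp_neg_mul_sq {b : ℝ} (hb : 0 < b) (k : ℕ) :
    Integrable fun x : ℝ => x ^ k * rexp (-b * x ^ 2) := by
  simpa only [Real.rpow_natCast] using
    integrable_rpow_mul_exp_neg_mul_sq hb (s := k) (by linarith [k.cast_nonneg (α := ℝ)])

theorem integral_gaussian_mul_quartic_sub_sextic :
    ∫ t : ℝ, rexp (-(1 / 2) * t ^ 2) * (t ^ 4 / 24 - t ^ 6 / 72) = -√(2 * π) / 12 := by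
  have moment (k : ℕ) := integral_pow_two_mul_mul_exp_neg_mul_sq (b := 1 / 2) (by norm_num) k
  have integrable (k : ℕ) := integrable_pow_mul_exp_neg_mul_sq (b := 1 / 2) (by norm_num) k
  calc ∫ t : ℝ, rexp (-(1 / 2) * t ^ 2) * (t ^ 4 / 24 - t ^ 6 / 72)
      = ∫ t : ℝ, (t ^ 4 * rexp (-(1 / 2) * t ^ 2) / 24
          - t ^ 6 * rexp (-(1 / 2) * t ^ 2) / 72) := by congr with t; ring
    _ = 3 * √(π / (1 / 2)) / 24 - 15 * √(π / (1 / 2)) / 72 := by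
      rw [integral_sub ((integrable 4).div_const _) ((integrable 6).div_const _), integral_div,
        integral_div, moment 2, moment 3]
      norm_num [Nat.doubleFactorial]
    _ = -√(2 * π) / 12 := by rw [div_div_eq_mul_div, div_one, mul_comm π]; ring

end Gaussian

section Stirling

theorem stirlingSeq_le_sqrt_pi_mul_exp {n : ℕ} (hn : n ≠ 0) :
    Stirling.stirlingSeq n ≤ √π * rexp (1 / (12 * n)) := by
  have telescope : ∀ m ≥ n, Real.log (Stirling.stirlingSeq n) ≤
      Real.log (Stirling.stirlingSeq m) + 1 / (12 * n) - 1 / (12 * m) := by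
    intro m hm
    induction m, hm using Nat.le_induction with
    | base => simp
    | succ m hm ih =>
      have hm₀ : (m : ℝ) ≠ 0 := by exact_mod_cast (by omega : m ≠ 0)
      have : (1 : ℝ) / (12 * m * (m + 1)) = 1 / (12 * m) - 1 / (12 * (m + 1 : ℕ)) := by
        push_cast; field_simp; ring
      linarith [Stirling.log_stirlingSeq_sdiff_le m]
  have hlim : Tendsto (fun m => Real.log (Stirling.stirlingSeq m) + 1 / (12 * n)) atTop
      (𝓝 (Real.log √π + 1 / (12 * n))) :=
    (Stirling.tendsto_stirlingSeq_sqrt_pi.log (by positivity)).add_const _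
  have hlog : Real.log (Stirling.stirlingSeq n) ≤ Real.log √π + 1 / (12 * n) := by
    refine ge_of_tendsto hlim ?_
    filter_upwards [eventually_ge_atTop n] with m hm
    linarith [telescope m hm, show (0 : ℝ) ≤ 1 / (12 * m) by positivity]
  have hpos : 0 < Stirling.stirlingSeq n :=
    (by positivity : 0 < √π).trans_le (Stirling.sqrt_pi_le_stirlingSeq hn)
  calc Stirling.stirlingSeq n ≤ rexp (Real.log √π + 1 / (12 * n)) :=
        (Real.log_le_iff_le_exp hpos).1 hlog
    _ = √π * rexp (1 / (12 * n)) := by rw [Real.exp_add, Real.exp_log (by positivity)]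

theorem mul_stirlingSeq_div_sqrt_pi_sub_one_mem_Icc {n : ℕ} (hn : n ≠ 0) :
    n * (Stirling.stirlingSeq n / √π - 1) ∈ Icc (0 : ℝ) 1 := by
  have hπ : 0 < √π := by positivity
  have hn₁ : (1 : ℝ) ≤ n := by exact_mod_cast Nat.one_le_iff_ne_zero.2 hn
  have lower : 1 ≤ Stirling.stirlingSeq n / √π := by
    rw [one_le_div hπ]
    exact Stirling.sqrt_pi_le_stirlingSeq hn
  have upper : Stirling.stirlingSeq n / √π ≤ rexp (1 / (12 * n)) := by
    rw [div_le_iff₀' hπ]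
    exact stirlingSeq_le_sqrt_pi_mul_exp hn
  have exp_le : rexp (1 / (12 * n)) - 1 ≤ 2 * (1 / (12 * n)) := by
    have hx : |1 / (12 * (n : ℝ))| = 1 / (12 * n) := abs_of_nonneg (by positivity)
    have hx₁ : 1 / (12 * (n : ℝ)) ≤ 1 := by rw [div_le_one (by positivity)]; linarith
    simpa only [hx] using (le_abs_self _).trans (Real.abs_exp_sub_one_le (hx.trans_le hx₁))
  refine ⟨mul_nonneg n.cast_nonneg (sub_nonneg.2 lower), ?_⟩
  calc n * (Stirling.stirlingSeq n / √π - 1) ≤ n * (2 * (1 / (12 * n))) := by gcongr; linarith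
    _ ≤ 1 := by field_simp; norm_num

end Stirling

section LambertW

theorem lambertW_mul_exp {x : ℝ} (hx : 0 ≤ x) : lambertW x * rexp (lambertW x) = x := by
  refine Function.invFun_eq (f := fun y : ℝ => y * rexp y) ?_
  obtain ⟨y, -, hy⟩ := intermediate_value_Icc hx
    (by fun_prop : ContinuousOn (fun y : ℝ => y * rexp y) (Icc 0 x))
    ⟨by simpa using hx, le_mul_of_one_le_right hx (Real.one_le_exp hx)⟩
  exact ⟨y, hy⟩

theorem lambertW_pos {x : ℝ} (hx : 0 < x) : 0 < lambertW x :=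
  pos_of_mul_pos_left ((lambertW_mul_exp hx.le).symm ▸ hx) (Real.exp_pos _).le

theorem log_eq_log_lambertW_add_lambertW {x : ℝ} (hx : 0 < x) :
    Real.log x = Real.log (lambertW x) + lambertW x := by
  conv_lhs => rw [← lambertW_mul_exp hx.le]
  rw [Real.log_mul (lambertW_pos hx).ne' (Real.exp_ne_zero _), Real.log_exp]

theorem tendsto_lambertW_atTop : Tendsto lambertW atTop atTop := by
  refine tendsto_atTop.2 fun C => ?_
  filter_upwards [eventually_gt_atTop 0, eventually_gt_atTop (C * rexp C)] with x hx hCx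
  by_contra! hC
  have hC₀ : 0 ≤ C := (lambertW_pos hx).le.trans hC.le
  refine hCx.not_ge ?_
  rw [← lambertW_mul_exp hx.le]
  gcongr

theorem tendsto_lambertW_div_log : Tendsto (fun x => lambertW x / Real.log x) atTop (𝓝 1) := by
  have h : Tendsto (fun r : ℝ => (Real.log r / r + 1)⁻¹) atTop (𝓝 1) := by
    simpa using (Real.isLittleO_log_id_atTop.tendsto_div_nhds_zero.add_const 1).inv₀ (by simp)
  refine (h.comp tendsto_lambertW_atTop).congr' ?_
  filter_upwards [eventually_gt_atTop 0] with x hx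
  rw [log_eq_log_lambertW_add_lambertW hx, Function.comp_apply,
    div_add_one (lambertW_pos hx).ne', inv_div]

end LambertW

section Touchard

theorem norm_aeval_le_aeval_norm {A : Type*} [NormedRing A] [NormOneClass A] (p : ℕ[X]) (z : A) :
    ‖aeval z p‖ ≤ aeval ‖z‖ p := by
  rw [aeval_eq_sum_range, aeval_eq_sum_range]
  refine norm_sum_le_of_le _ fun j _ => norm_nsmul_le.trans ?_
  rw [nsmul_eq_mul]
  gcongr
  exact norm_pow_le _ _

theorem aeval_le_eval_one_mul_pow {p : ℕ[X]} {n : ℕ} (hp : p.natDegree ≤ n) {r : ℝ} (hr : 1 ≤ r) :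
    aeval r p ≤ p.eval 1 * r ^ n := by
  rw [aeval_eq_sum_range' (Nat.lt_succ_of_le hp), eval_eq_sum_range' (Nat.lt_succ_of_le hp),
    Nat.cast_sum, Finset.sum_mul]
  refine Finset.sum_le_sum fun j hj => ?_
  simp only [nsmul_eq_mul, one_pow, mul_one]
  gcongr
  exact Finset.mem_range_succ_iff.1 hj

/-- The Touchard polynomials, characterised by
`(z d/dz)ᵏ exp z = Tₖ(z) exp z`; they are the derivatives of `θ ↦ exp (r e^{iθ})` up to `iᵏ`. -/
noncomputable def touchard : ℕ → ℕ[X]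
  | 0 => 1
  | k + 1 => X * (touchard k + derivative (touchard k))

theorem touchard_zero : touchard 0 = 1 := rfl

theorem touchard_succ (k : ℕ) :
    touchard (k + 1) = X * (touchard k + derivative (touchard k)) := rfl

theorem touchard_one : touchard 1 = X := by simp [touchard]

theorem touchard_two : touchard 2 = X ^ 2 + X := by
  rw [touchard_succ, touchard_one, derivative_X]; ring

theorem touchard_three : touchard 3 = X ^ 3 + 3 * X ^ 2 + X := by
  simp only [touchard_succ 2, touchard_two, derivative_add, derivative_X_sq, derivative_X,
    map_ofNat]
  ring

theorem eval_one_touchard_three : (touchard 3).eval 1 = 5 := by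
  simp [touchard_three]

theorem eval_one_touchard_four : (touchard 4).eval 1 = 15 := by
  simp [touchard_succ 3, touchard_three]

theorem monic_touchard (k : ℕ) : (touchard k).Monic := by
  induction k with
  | zero => exact monic_one
  | succ k ih => exact monic_X.mul (ih.add_of_left (degree_derivative_lt ih.ne_zero))

theorem natDegree_touchard (k : ℕ) : (touchard k).natDegree = k := by
  induction k with
  | zero => exact natDegree_one
  | succ k ih =>
    have hlt := degree_derivative_lt (monic_touchard k).ne_zero
    rw [touchard_succ, monic_X.natDegree_mul ((monic_touchard k).add_of_left hlt), natDegree_X,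
      natDegree_add_eq_left_of_degree_lt hlt, ih, add_comm]

theorem tendsto_touchard_div_pow (k : ℕ) :
    Tendsto (fun r : ℝ => aeval r (touchard k) / r ^ k) atTop (𝓝 1) := by
  have hmonic := (monic_touchard k).map (Nat.castRingHom ℝ)
  have hdegree : ((touchard k).map (Nat.castRingHom ℝ)).degree = (X ^ k : ℝ[X]).degree := by
    rw [degree_eq_natDegree hmonic.ne_zero, (monic_touchard k).natDegree_map, natDegree_touchard,
      degree_X_pow]
  have h := div_tendsto_atTop_leadingCoeff_div_of_degree_eq _ _ hdegree
  rw [hmonic.leadingCoeff, leadingCoeff_X_pow, div_one] at h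
  simpa only [eval_map, eval_pow, eval_X] using! h

theorem hasDerivAt_aeval_circleMap_mul_exp (p : ℕ[X]) (r θ : ℝ) :
    HasDerivAt (fun θ : ℝ => aeval (circleMap 0 r θ) p * cexp (circleMap 0 r θ))
      (I * aeval (circleMap 0 r θ) (X * (p + derivative p)) * cexp (circleMap 0 r θ)) θ := by
  have hcircle := hasDerivAt_circleMap 0 r θ
  have hexp := (hasDerivAt_exp (circleMap 0 r θ)).comp θ hcircle
  convert! ((p.hasDerivAt_aeval (circleMap 0 r θ)).comp θ hcircle).mul hexp using 1
  simp only [map_mul, map_add, aeval_X, Function.comp_apply]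
  ring

theorem iteratedDeriv_exp_circleMap (k : ℕ) (r : ℝ) :
    iteratedDeriv k (fun θ => cexp (circleMap 0 r θ)) = fun θ =>
      I ^ k * (aeval (circleMap 0 r θ) (touchard k) * cexp (circleMap 0 r θ)) := by
  induction k with
  | zero => simp [touchard_zero]
  | succ k ih =>
    ext θ
    rw [iteratedDeriv_succ, ih,
      ((hasDerivAt_aeval_circleMap_mul_exp (touchard k) r θ).const_mul _).deriv, touchard_succ]
    ring

theorem norm_iteratedDeriv_exp_circleMap_le (k : ℕ) {r : ℝ} (hr : 0 ≤ r) (θ : ℝ) :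
    ‖iteratedDeriv k (fun θ => cexp (circleMap 0 r θ)) θ‖ ≤ rexp r * aeval r (touchard k) := by
  have hnorm : ‖circleMap 0 r θ‖ = r := by rw [norm_circleMap_zero, abs_of_nonneg hr]
  have hpoly := norm_aeval_le_aeval_norm (touchard k) (circleMap 0 r θ)
  have hexp := norm_exp_le_exp_norm (circleMap 0 r θ)
  rw [hnorm] at hpoly hexp
  simp only [iteratedDeriv_exp_circleMap, norm_mul, norm_pow, norm_I, one_pow, one_mul]
  rw [mul_comm (rexp r)]
  exact mul_le_mul hpoly hexp (norm_nonneg _) ((norm_nonneg _).trans hpoly)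

/-- The remainder of the `n`-th order Taylor expansion in `θ`, at `θ = 0`, of
`exp (r e^{iθ})`. -/
noncomputable def expCircleRemainder (n : ℕ) (r θ : ℝ) : ℂ :=
  cexp (circleMap 0 r θ)
    - cexp r * ∑ j ∈ Finset.range n, (θ * I) ^ j / j ! * (aeval r (touchard j) : ℝ)

theorem expCircleRemainder_succ (n : ℕ) (r θ : ℝ) :
    expCircleRemainder (n + 1) r θ = expCircleRemainder n r θ
      - cexp r * ((θ * I) ^ n / n ! * (aeval r (touchard n) : ℝ)) := by
  rw [expCircleRemainder, expCircleRemainder, Finset.sum_range_succ]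
  ring

theorem norm_expCircleRemainder_le (n : ℕ) {r : ℝ} (hr : 0 ≤ r) (θ : ℝ) :
    ‖expCircleRemainder n r θ‖ ≤ rexp r * aeval r (touchard n) * |θ| ^ n := by
  have hsmooth : ContDiff ℝ n fun θ => cexp (circleMap 0 r θ) := (contDiff_circleMap 0 r).cexp
  have htaylor :=
    norm_sub_taylor_sum_le hsmooth (norm_iteratedDeriv_exp_circleMap_le n hr) 0 θ
  rw [sub_zero] at htaylor
  convert! htaylor using 2
  rw [expCircleRemainder, Finset.mul_sum]
  refine congrArg _ (Finset.sum_congr rfl fun j _ => ?_)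
  have hzero : circleMap 0 r 0 = r := by simp [circleMap]
  have hcast : aeval (r : ℂ) (touchard j) = ((aeval r (touchard j) : ℝ) : ℂ) :=
    aeval_algebraMap_apply ℂ r (touchard j)
  simp only [iteratedDeriv_exp_circleMap, hzero, hcast, real_smul]
  push_cast
  ring

theorem norm_expCircleRemainder_le_mul_abs_mul_pow (n : ℕ) {r : ℝ} (hr : 1 ≤ r) (θ : ℝ) :
    ‖expCircleRemainder n r θ‖ ≤ (touchard n).eval 1 * (rexp r * |r * θ| ^ n) := by
  have hr₀ : 0 ≤ r := by linarith
  calc ‖expCircleRemainder n r θ‖ ≤ rexp r * aeval r (touchard n) * |θ| ^ n :=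
        norm_expCircleRemainder_le n hr₀ θ
    _ ≤ rexp r * ((touchard n).eval 1 * r ^ n) * |θ| ^ n := by
        gcongr; exact aeval_le_eval_one_mul_pow (natDegree_touchard n).le hr
    _ = (touchard n).eval 1 * (rexp r * |r * θ| ^ n) := by
        rw [abs_mul, abs_of_nonneg hr₀]; ring

theorem re_expCircleRemainder_three (r θ : ℝ) :
    (expCircleRemainder 3 r θ).re = (expCircleRemainder 4 r θ).re := by
  have hodd : cexp r * ((θ * I) ^ 3 / 3 ! * (aeval r (touchard 3) : ℝ))
      = (-(rexp r * θ ^ 3 / 3 ! * aeval r (touchard 3)) : ℝ) * I := by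
    push_cast
    rw [mul_pow, I_pow_three]
    ring
  rw [expCircleRemainder_succ 3, hodd, sub_re, re_ofReal_mul, I_re, mul_zero, sub_zero]

end Touchard

section SaddlePoint

/-- The standard deviation scale `σ(r)` of the saddle point: `σ² = r (r + 1) eʳ` is minus the second
derivative at `θ = 0` of `saddleExponent r`. -/
noncomputable def saddleScale (r : ℝ) : ℝ := √(r * (r + 1) * rexp r)

/-- The exponent `exp (r e^{iθ}) - eʳ - i r eʳ θ`, normalised to vanish to second order at `θ = 0`.
The linear term is the logarithm of `e^{-inθ}` in Cauchy's formula when `n = r eʳ`. -/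
noncomputable def saddleExponent (r θ : ℝ) : ℂ :=
  cexp (circleMap 0 r θ) - cexp r - (r * rexp r * θ : ℝ) * I

/-- The normalised Cauchy integral for the Bell numbers over the circle of radius `r`; only the real
part of the integrand contributes. -/
noncomputable def saddleIntegral (r : ℝ) : ℝ := ∫ θ in -π..π, (cexp (saddleExponent r θ)).re

theorem saddleScale_pos {r : ℝ} (hr : 0 < r) : 0 < saddleScale r := by
  rw [saddleScale]; positivity

theorem sq_saddleScale {r : ℝ} (hr : 0 ≤ r) : saddleScale r ^ 2 = r * (r + 1) * rexp r :=
  Real.sq_sqrt (by positivity)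

theorem tendsto_saddleScale_atTop : Tendsto saddleScale atTop atTop := by
  refine tendsto_atTop_mono' atTop ?_ tendsto_id
  filter_upwards [eventually_ge_atTop 0] with r hr
  refine Real.le_sqrt_of_sq_le ?_
  calc r ^ 2 ≤ r * (r + 1) * 1 := by linarith
    _ ≤ r * (r + 1) * rexp r := by gcongr; exact Real.one_le_exp hr

theorem continuous_saddleExponent (r : ℝ) : Continuous (saddleExponent r) := by
  have := continuous_circleMap 0 r
  unfold saddleExponent
  fun_prop

theorem saddleExponent_div_saddleScale {r : ℝ} (hr : 0 < r) (t : ℝ) :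
    saddleExponent r (t / saddleScale r)
      = (-(1 / 2) * t ^ 2 : ℝ) + expCircleRemainder 3 r (t / saddleScale r) := by
  set θ := t / saddleScale r with hθ
  have ht : t ^ 2 = r * (r + 1) * rexp r * θ ^ 2 := by
    rw [← sq_saddleScale hr.le, hθ, div_pow]
    field_simp [(saddleScale_pos hr).ne']
  rw [ht, saddleExponent, expCircleRemainder]
  simp only [Finset.sum_range_succ, Finset.sum_range_zero, touchard_zero, touchard_one,
    touchard_two, map_add, map_pow, map_one, aeval_X, mul_pow, I_sq, Nat.factorial]
  push_cast
  ring

theorem re_cexp_saddleExponent_div_saddleScale {r : ℝ} (hr : 0 < r) (t : ℝ) :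
    (cexp (saddleExponent r (t / saddleScale r))).re - rexp (-(1 / 2) * t ^ 2)
      = rexp (-(1 / 2) * t ^ 2) * (cexp (expCircleRemainder 3 r (t / saddleScale r)) - 1).re := by
  rw [saddleExponent_div_saddleScale hr, Complex.exp_add, ← ofReal_exp, re_ofReal_mul, sub_re,
    one_re]
  ring

theorem tendsto_mul_exp_half_div_saddleScale :
    Tendsto (fun r => r * (rexp (r / 2) / saddleScale r)) atTop (𝓝 1) := by
  have h : Tendsto (fun r : ℝ => √(1 + r⁻¹)⁻¹) atTop (𝓝 1) := by
    simpa using ((tendsto_inv_atTop_zero.const_add (1 : ℝ)).inv₀ (by simp)).sqrt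
  refine h.congr' ?_
  filter_upwards [eventually_gt_atTop 0] with r hr
  have hσ := saddleScale_pos hr
  rw [← Real.sqrt_sq (by positivity : 0 ≤ r * (rexp (r / 2) / saddleScale r)), mul_pow, div_pow,
    sq_saddleScale hr.le, ← Real.exp_nat_mul]
  congr 1
  rw [Nat.cast_ofNat, mul_div_cancel₀ r two_ne_zero]
  field_simp

theorem tendsto_exp_half_div_saddleScale_pow_mul_touchard (n : ℕ) :
    Tendsto (fun r => (rexp (r / 2) / saddleScale r) ^ n * aeval r (touchard n)) atTop (𝓝 1) := by
  have h := (tendsto_mul_exp_half_div_saddleScale.pow n).mul (tendsto_touchard_div_pow n)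
  rw [one_pow, one_mul] at h
  refine h.congr' ?_
  filter_upwards [eventually_gt_atTop 0] with r hr
  rw [mul_pow]
  field_simp

theorem tendsto_mul_expCircleRemainder_succ (n : ℕ) (t : ℝ) :
    Tendsto (fun r => ((rexp (r / 2) ^ n * rexp (-r) : ℝ) : ℂ) *
      expCircleRemainder (n + 1) r (t / saddleScale r)) atTop (𝓝 0) := by
  have bound : Tendsto (fun r => |t| ^ (n + 1) * (rexp (-(r / 2)) *
      ((rexp (r / 2) / saddleScale r) ^ (n + 1) * aeval r (touchard (n + 1))))) atTop (𝓝 0) := by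
    have hdecay : Tendsto (fun r : ℝ => rexp (-(r / 2))) atTop (𝓝 0) :=
      Real.tendsto_exp_neg_atTop_nhds_zero.comp (tendsto_id.atTop_div_const two_pos)
    simpa using (hdecay.mul
      (tendsto_exp_half_div_saddleScale_pow_mul_touchard (n + 1))).const_mul (|t| ^ (n + 1))
  refine squeeze_zero_norm' ?_ bound
  filter_upwards [eventually_gt_atTop 0] with r hr
  rw [norm_mul, norm_real, Real.norm_of_nonneg (by positivity)]
  calc rexp (r / 2) ^ n * rexp (-r) * ‖expCircleRemainder (n + 1) r (t / saddleScale r)‖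
      ≤ rexp (r / 2) ^ n * rexp (-r) *
          (rexp r * aeval r (touchard (n + 1)) * |t / saddleScale r| ^ (n + 1)) := by
        gcongr; exact norm_expCircleRemainder_le _ hr.le _
    _ = _ := by
        rw [abs_div, abs_of_pos (saddleScale_pos hr), Real.exp_neg, Real.exp_neg]
        field_simp
        ring

theorem tendsto_mul_expCircleRemainder (n : ℕ) (t : ℝ) :
    Tendsto (fun r => ((rexp (r / 2) ^ n * rexp (-r) : ℝ) : ℂ) *
      expCircleRemainder n r (t / saddleScale r)) atTop (𝓝 ((t * I) ^ n / n !)) := by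
  have leading := (continuous_ofReal.tendsto _).comp
    (tendsto_exp_half_div_saddleScale_pow_mul_touchard n) |>.const_mul ((t * I) ^ n / n !)
  have h := (tendsto_mul_expCircleRemainder_succ n t).add leading
  rw [zero_add, ofReal_one, mul_one] at h
  refine h.congr fun r => ?_
  have hexp : cexp (-r) * cexp r = 1 := by rw [← Complex.exp_add, neg_add_cancel, Complex.exp_zero]
  simp only [expCircleRemainder_succ, Function.comp_apply, mul_sub, ofReal_mul, ofReal_pow,
    ofReal_div, ofReal_exp, ofReal_ofNat, ofReal_neg, mul_pow, div_pow]
  linear_combination (-(cexp (r / 2) ^ n * ((t : ℂ) ^ n / saddleScale r ^ n * I ^ n / n ! *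
    (aeval r (touchard n) : ℝ)))) * hexp

theorem tendsto_exp_mul_re_cexp_saddleExponent_sub (t : ℝ) :
    Tendsto (fun r => rexp r *
        ((cexp (saddleExponent r (t / saddleScale r))).re - rexp (-(1 / 2) * t ^ 2))) atTop
      (𝓝 (rexp (-(1 / 2) * t ^ 2) * (t ^ 4 / 24 - t ^ 6 / 72))) := by
  have hexp (r : ℝ) : rexp r = rexp (r / 2) ^ 2 := by rw [← Real.exp_nat_mul]; congr 1; ring
  have cubic : Tendsto (fun r => (rexp (r / 2) : ℂ) * expCircleRemainder 3 r (t / saddleScale r))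
      atTop (𝓝 ((t * I) ^ 3 / 3 !)) := by
    refine (tendsto_mul_expCircleRemainder 3 t).congr fun r => ?_
    rw [Real.exp_neg, hexp r, show rexp (r / 2) ^ 3 * (rexp (r / 2) ^ 2)⁻¹ = rexp (r / 2) by
      field_simp]
  have quartic : Tendsto
      (fun r => rexp (r / 2) ^ 2 * (expCircleRemainder 3 r (t / saddleScale r)).re)
      atTop (𝓝 (t ^ 4 / 24)) := by
    have h := (continuous_re.tendsto _).comp (tendsto_mul_expCircleRemainder 4 t)
    rw [show ((t * I) ^ 4 / 4 ! : ℂ) = (t ^ 4 / 24 : ℝ) by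
      rw [mul_pow, I_pow_four]; push_cast [Nat.factorial]; ring, ofReal_re] at h
    refine h.congr fun r => ?_
    rw [Function.comp_apply, re_ofReal_mul, re_expCircleRemainder_three, Real.exp_neg, hexp r]
    field_simp
  have hM : Tendsto (fun r : ℝ => rexp (r / 2)) atTop atTop :=
    Real.tendsto_exp_atTop.comp (tendsto_id.atTop_div_const two_pos)
  have h := (tendsto_sq_mul_re_cexp_sub_one hM quartic cubic).const_mul (rexp (-(1 / 2) * t ^ 2))
  rw [show (((t * I) ^ 3 / 3 !) ^ 2 / 2 : ℂ) = (-(t ^ 6 / 72) : ℝ) by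
    rw [div_pow, ← pow_mul, mul_pow, show 3 * 2 = 4 + 2 by rfl, pow_add I, I_pow_four, I_sq]
    push_cast [Nat.factorial]; ring, ofReal_re, ← sub_eq_add_neg] at h
  refine h.congr' ?_
  filter_upwards [eventually_gt_atTop 0] with r hr
  rw [re_cexp_saddleExponent_div_saddleScale hr, hexp r]
  ring

theorem exp_mul_sq_mul_div_saddleScale_le {r : ℝ} (hr : 0 < r) (t : ℝ) :
    rexp r * (r * (t / saddleScale r)) ^ 2 ≤ t ^ 2 := by
  rw [mul_pow, div_pow, sq_saddleScale hr.le]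
  field_simp
  nlinarith [sq_nonneg t]

theorem sq_le_of_abs_div_saddleScale_le_pi {r t : ℝ} (hr : 1 ≤ r)
    (ht : |t / saddleScale r| ≤ π) :
    t ^ 2 ≤ 20 * r ^ 2 * rexp r := by
  have hr₀ : 0 < r := by linarith
  have hθ : (t / saddleScale r) ^ 2 ≤ 10 :=
    calc (t / saddleScale r) ^ 2 ≤ π ^ 2 := sq_le_sq.2 (ht.trans (le_abs_self π))
      _ ≤ 10 := by nlinarith [Real.pi_pos, Real.pi_lt_d2]
  calc t ^ 2 = r * (r + 1) * rexp r * (t / saddleScale r) ^ 2 := by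
        rw [← sq_saddleScale hr₀.le, div_pow, mul_div_cancel₀ _ (by
          have := saddleScale_pos hr₀; positivity)]
    _ ≤ r * (r + r) * rexp r * 10 := by gcongr
    _ = 20 * r ^ 2 * rexp r := by ring

theorem abs_re_expCircleRemainder_three_le {r : ℝ} (hr : 1 ≤ r) (θ : ℝ) :
    |(expCircleRemainder 3 r θ).re| ≤ 15 * (rexp r * |r * θ| ^ 4) := by
  have h := norm_expCircleRemainder_le_mul_abs_mul_pow 4 hr θ
  rw [eval_one_touchard_four] at h
  rw [re_expCircleRemainder_three]
  exact (abs_re_le_norm _).trans (mod_cast h)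

theorem exp_mul_abs_re_cexp_saddleExponent_sub_le {r t : ℝ} (hr : 1 ≤ r)
    (ht : |r * (t / saddleScale r)| ≤ 1 / 20) :
    rexp r * |(cexp (saddleExponent r (t / saddleScale r))).re - rexp (-(1 / 2) * t ^ 2)|
      ≤ rexp (-(1 / 4) * t ^ 2) * (15 * t ^ 4 + 25 * t ^ 6) := by
  have hr₀ : 0 < r := by linarith
  have scale := exp_mul_sq_mul_div_saddleScale_le hr₀ t
  have norm_le := norm_expCircleRemainder_le_mul_abs_mul_pow 3 hr (t / saddleScale r)
  have re_le := abs_re_expCircleRemainder_three_le hr (t / saddleScale r)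
  rw [eval_one_touchard_three, Nat.cast_ofNat] at norm_le
  rw [← sq_abs] at scale
  rw [re_cexp_saddleExponent_div_saddleScale hr₀, abs_mul, Real.abs_exp]
  set z := expCircleRemainder 3 r (t / saddleScale r)
  set x := |r * (t / saddleScale r)|
  -- The threshold `1 / 20` lets half of the Gaussian factor absorb `exp ‖z‖`.
  have norm_le_quarter : ‖z‖ ≤ t ^ 2 / 4 :=
    calc ‖z‖ ≤ 5 * (rexp r * x ^ 3) := norm_le
      _ = 5 * x * (rexp r * x ^ 2) := by ring
      _ ≤ 5 * (1 / 20) * t ^ 2 := by gcongr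
      _ = t ^ 2 / 4 := by ring
  have re_le_quartic : rexp r * |z.re| ≤ 15 * t ^ 4 :=
    calc rexp r * |z.re| ≤ rexp r * (15 * (rexp r * x ^ 4)) := by gcongr
      _ = 15 * (rexp r * x ^ 2) ^ 2 := by ring
      _ ≤ 15 * (t ^ 2) ^ 2 := by gcongr
      _ = 15 * t ^ 4 := by ring
  have norm_sq_le_sextic : rexp r * ‖z‖ ^ 2 ≤ 25 * t ^ 6 :=
    calc rexp r * ‖z‖ ^ 2 ≤ rexp r * (5 * (rexp r * x ^ 3)) ^ 2 := by gcongr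
      _ = 25 * (rexp r * x ^ 2) ^ 3 := by ring
      _ ≤ 25 * (t ^ 2) ^ 3 := by gcongr
      _ = 25 * t ^ 6 := by ring
  calc rexp r * (rexp (-(1 / 2) * t ^ 2) * |(cexp z - 1).re|)
      ≤ rexp r * (rexp (-(1 / 2) * t ^ 2) * (|z.re| + ‖z‖ ^ 2 * rexp ‖z‖)) := by
        gcongr; exact abs_re_cexp_sub_one_le z
    _ = rexp (-(1 / 2) * t ^ 2) * (rexp r * |z.re| * 1 + rexp r * ‖z‖ ^ 2 * rexp ‖z‖) := by ring
    _ ≤ rexp (-(1 / 2) * t ^ 2) * (15 * t ^ 4 * rexp (t ^ 2 / 4)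
          + 25 * t ^ 6 * rexp (t ^ 2 / 4)) := by
        gcongr; exact Real.one_le_exp (by positivity)
    _ = rexp (-(1 / 4) * t ^ 2) * (15 * t ^ 4 + 25 * t ^ 6) := by
        rw [show -(1 / 4) * t ^ 2 = -(1 / 2) * t ^ 2 + t ^ 2 / 4 by ring, Real.exp_add]; ring

theorem re_saddleExponent_le (r θ : ℝ) :
    (saddleExponent r θ).re ≤ rexp r * (rexp (r * (Real.cos θ - 1)) - 1) := by
  have hcos : (circleMap 0 r θ).re = r * Real.cos θ := by
    simp [circleMap, exp_ofReal_mul_I_re]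
  have h := re_le_norm (cexp (circleMap 0 r θ))
  rw [norm_exp, hcos] at h
  rw [saddleExponent, sub_re, sub_re, re_ofReal_mul, I_re, mul_zero, sub_zero, exp_ofReal_re,
    mul_sub, ← Real.exp_add, mul_one, mul_sub, mul_one, add_sub_cancel]
  linarith

theorem re_saddleExponent_le_neg {r θ : ℝ} (hr : 1 ≤ r) (hθ : |θ| ≤ π)
    (hθr : 1 / 20 < |r * θ|) : (saddleExponent r θ).re ≤ -(1 / 4000 * rexp r / r) := by
  set y := 1 / (2000 * r) with hy
  have : 0 < r := by linarith
  have hy₀ : 0 < y := by positivity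
  have hy₁ : y ≤ 1 := by rw [hy, div_le_one (by positivity)]; linarith
  have cos_le : r * (Real.cos θ - 1) ≤ -y := by
    have hcos := Real.cos_le_one_sub_mul_cos_sq hθ
    have hπ : 1 / 5 ≤ 2 / π ^ 2 := by
      rw [div_le_div_iff₀ (by norm_num) (by positivity)]
      nlinarith [Real.pi_pos, Real.pi_lt_d2]
    have hsq : 1 / 400 ≤ (r * θ) ^ 2 := by rw [← sq_abs]; nlinarith
    calc r * (Real.cos θ - 1) ≤ r * -(1 / 5 * θ ^ 2) := by
          gcongr; nlinarith [sq_nonneg θ]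
      _ = -((r * θ) ^ 2 / (5 * r)) := by field_simp
      _ ≤ -(1 / 400 / (5 * r)) := by gcongr
      _ = -y := by rw [hy]; field_simp; norm_num
  have exp_le : rexp (-y) ≤ 1 - y / 2 := by
    rw [Real.exp_neg]
    refine inv_le_of_inv_le₀ (by linarith) (le_trans ?_ (Real.add_one_le_exp y))
    rw [inv_le_iff_one_le_mul₀ (by linarith)]
    nlinarith
  calc (saddleExponent r θ).re ≤ rexp r * (rexp (r * (Real.cos θ - 1)) - 1) :=
        re_saddleExponent_le r θ
    _ ≤ rexp r * (rexp (-y) - 1) := by gcongr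
    _ ≤ rexp r * -(y / 2) := by gcongr; linarith
    _ = -(1 / 4000 * rexp r / r) := by rw [hy]; field_simp; norm_num

theorem eventually_exp_mul_abs_re_cexp_saddleExponent_le :
    ∀ᶠ r in atTop, ∀ t, |t / saddleScale r| ≤ π → 1 / 20 < |r * (t / saddleScale r)| →
      rexp r * |(cexp (saddleExponent r (t / saddleScale r))).re| ≤ (1 + t ^ 2)⁻¹ := by
  filter_upwards [eventually_exp_mul_exp_neg_mul_le_one (c := 1 / 4000) (K := 20) (by norm_num)
    (by norm_num), eventually_ge_atTop 1] with r hdecay hr t hθ hθr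
  rw [← one_div, le_div_iff₀ (by positivity)]
  have abs_le : |(cexp (saddleExponent r (t / saddleScale r))).re|
      ≤ rexp (-(1 / 4000 * rexp r / r)) :=
    calc |(cexp (saddleExponent r (t / saddleScale r))).re|
        ≤ ‖cexp (saddleExponent r (t / saddleScale r))‖ := abs_re_le_norm _
      _ ≤ rexp (-(1 / 4000 * rexp r / r)) := by
        rw [norm_exp]; gcongr; exact re_saddleExponent_le_neg hr hθ hθr
  calc _ ≤ rexp r * rexp (-(1 / 4000 * rexp r / r)) * (1 + 20 * r ^ 2 * rexp r) := by
        gcongr; exact sq_le_of_abs_div_saddleScale_le_pi hr hθ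
    _ ≤ 1 := hdecay

theorem exp_mul_gaussian_le {r t : ℝ} (hr : 0 < r) (ht : 1 / 20 < |r * (t / saddleScale r)|) :
    rexp r * rexp (-(1 / 2) * t ^ 2) ≤ rexp (-(1 / 4) * t ^ 2) * (400 * t ^ 2) := by
  have hsq : 1 ≤ 400 * (r * (t / saddleScale r)) ^ 2 := by rw [← sq_abs]; nlinarith
  have hexp : rexp r ≤ 400 * t ^ 2 := by
    nlinarith [exp_mul_sq_mul_div_saddleScale_le hr t, Real.exp_pos r]
  rw [mul_comm]
  gcongr
  nlinarith [sq_nonneg t]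

/-- The difference, magnified by `eʳ`, between the rescaled saddle point integrand, extended by zero
outside `|t| ≤ π σ(r)`, and its Gaussian limit. -/
noncomputable def saddleDeviation (r t : ℝ) : ℝ :=
  rexp r * ((Ioc (-(π * saddleScale r)) (π * saddleScale r)).indicator
    (fun t => (cexp (saddleExponent r (t / saddleScale r))).re) t - rexp (-(1 / 2) * t ^ 2))

theorem continuous_re_cexp_saddleExponent (r : ℝ) :
    Continuous fun θ => (cexp (saddleExponent r θ)).re :=
  continuous_re.comp (continuous_saddleExponent r).cexp

theorem measurable_saddleDeviation (r : ℝ) : Measurable (saddleDeviation r) := by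
  have := (continuous_re_cexp_saddleExponent r).measurable
  exact (((this.comp (measurable_id.div_const _)).indicator measurableSet_Ioc).sub
    (by fun_prop)).const_mul _

theorem tendsto_saddleDeviation (t : ℝ) :
    Tendsto (fun r => saddleDeviation r t) atTop
      (𝓝 (rexp (-(1 / 2) * t ^ 2) * (t ^ 4 / 24 - t ^ 6 / 72))) := by
  refine (tendsto_exp_mul_re_cexp_saddleExponent_sub t).congr' ?_
  have hscale := tendsto_saddleScale_atTop.const_mul_atTop Real.pi_pos
  filter_upwards [hscale.eventually_gt_atTop |t|] with r ht
  rw [saddleDeviation, indicator_of_mem (Ioo_subset_Ioc_self (abs_lt.1 ht))]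

/-- An integrable function of `t` dominating `saddleDeviation r t` for all large `r`. -/
noncomputable def saddleMajorant (t : ℝ) : ℝ :=
  rexp (-(1 / 4) * t ^ 2) * (400 * t ^ 2 + 15 * t ^ 4 + 25 * t ^ 6) + (1 + t ^ 2)⁻¹

theorem integrable_saddleMajorant : Integrable saddleMajorant := by
  have integrable (k : ℕ) := integrable_pow_mul_exp_neg_mul_sq (b := 1 / 4) (by norm_num) k
  have h := (((integrable 2).const_mul 400).add ((integrable 4).const_mul 15)).add
    ((integrable 6).const_mul 25) |>.add integrable_inv_one_add_sq
  refine h.congr (.of_forall fun t => ?_)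
  simp only [Pi.add_apply, saddleMajorant]
  ring

theorem eventually_abs_saddleDeviation_le :
    ∀ᶠ r in atTop, ∀ t, |saddleDeviation r t| ≤ saddleMajorant t := by
  filter_upwards [eventually_exp_mul_abs_re_cexp_saddleExponent_le, eventually_ge_atTop 1]
    with r tail hr t
  have hr₀ : 0 < r := by linarith
  have hσ := saddleScale_pos hr₀
  have inv_nonneg : 0 ≤ (1 + t ^ 2)⁻¹ := by positivity
  have poly_nonneg : 0 ≤ rexp (-(1 / 4) * t ^ 2) * (15 * t ^ 4 + 25 * t ^ 6) := by positivity
  have sq_nonneg : 0 ≤ rexp (-(1 / 4) * t ^ 2) * (400 * t ^ 2) := by positivity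
  rw [saddleDeviation, abs_mul, Real.abs_exp, saddleMajorant]
  by_cases ht : t ∈ Ioc (-(π * saddleScale r)) (π * saddleScale r)
  · rw [indicator_of_mem ht]
    have hθ : |t / saddleScale r| ≤ π := by
      rw [abs_div, abs_of_pos hσ, div_le_iff₀ hσ, abs_le]
      exact ⟨ht.1.le, ht.2⟩
    rcases le_or_gt |r * (t / saddleScale r)| (1 / 20) with hcenter | htail
    · linarith [exp_mul_abs_re_cexp_saddleExponent_sub_le hr hcenter]
    · have gaussian := exp_mul_gaussian_le hr₀ htail
      calc _ ≤ rexp r * (|(cexp (saddleExponent r (t / saddleScale r))).re|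
            + rexp (-(1 / 2) * t ^ 2)) := by
            gcongr; exact (abs_sub _ _).trans_eq (by rw [Real.abs_exp])
        _ ≤ _ := by linarith [tail t hθ htail]
  · rw [indicator_of_notMem ht, zero_sub, abs_neg, Real.abs_exp]
    have htail : 1 / 20 < |r * (t / saddleScale r)| := by
      have hle : π ≤ |t / saddleScale r| := by
        rw [abs_div, abs_of_pos hσ, le_div_iff₀ hσ]
        by_contra! hlt
        exact ht (Ioo_subset_Ioc_self (abs_lt.1 hlt))
      rw [abs_mul, abs_of_pos hr₀]
      nlinarith [Real.pi_gt_three]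
    linarith [exp_mul_gaussian_le hr₀ htail]

theorem tendsto_integral_saddleDeviation :
    Tendsto (fun r => ∫ t, saddleDeviation r t) atTop (𝓝 (-√(2 * π) / 12)) := by
  rw [← integral_gaussian_mul_quartic_sub_sextic]
  exact tendsto_integral_filter_of_dominated_convergence saddleMajorant
    (.of_forall fun r => (measurable_saddleDeviation r).aestronglyMeasurable)
    (eventually_abs_saddleDeviation_le.mono fun r hr => .of_forall hr)
    integrable_saddleMajorant (.of_forall tendsto_saddleDeviation)

theorem integral_saddleDeviation {r : ℝ} (hr : 0 < r) :
    ∫ t, saddleDeviation r t = rexp r * (saddleScale r * saddleIntegral r - √(2 * π)) := by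
  have hσ := saddleScale_pos hr
  have hcont : Continuous fun t => (cexp (saddleExponent r (t / saddleScale r))).re :=
    (continuous_re_cexp_saddleExponent r).comp (continuous_id.div_const _)
  have gaussian : ∫ t : ℝ, rexp (-(1 / 2) * t ^ 2) = √(2 * π) := by
    rw [integral_gaussian, div_div_eq_mul_div, div_one, mul_comm]
  have rescale : ∫ t in -(π * saddleScale r)..π * saddleScale r,
      (cexp (saddleExponent r (t / saddleScale r))).re = saddleScale r * saddleIntegral r := by
    rw [intervalIntegral.integral_comp_div (fun θ => (cexp (saddleExponent r θ)).re) hσ.ne',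
      neg_div, mul_div_cancel_right₀ _ hσ.ne', smul_eq_mul, saddleIntegral]
  have hle : -(π * saddleScale r) ≤ π * saddleScale r := by
    have := mul_pos Real.pi_pos hσ
    linarith
  simp only [saddleDeviation]
  rw [integral_const_mul, integral_sub (hcont.integrableOn_Ioc.integrable_indicator
    measurableSet_Ioc) (integrable_exp_neg_mul_sq (by norm_num)),
    integral_indicator measurableSet_Ioc, ← intervalIntegral.integral_of_le hle, rescale, gaussian]

theorem tendsto_exp_mul_saddleScale_mul_saddleIntegral_sub_one :
    Tendsto (fun r => rexp r * (saddleScale r * saddleIntegral r / √(2 * π) - 1)) atTop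
      (𝓝 (-1 / 12)) := by
  have hπ : √(2 * π) ≠ 0 := by positivity
  have h := tendsto_integral_saddleDeviation.div_const √(2 * π)
  rw [show -√(2 * π) / 12 / √(2 * π) = -1 / 12 by field_simp] at h
  refine h.congr' ?_
  filter_upwards [eventually_gt_atTop 0] with r hr
  rw [integral_saddleDeviation hr, mul_div_assoc, sub_div, div_self hπ]

theorem tendsto_saddleScale_mul_saddleIntegral :
    Tendsto (fun r => saddleScale r * saddleIntegral r / √(2 * π)) atTop (𝓝 1) := by
  have h := (Real.tendsto_exp_neg_atTop_nhds_zero.mul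
    tendsto_exp_mul_saddleScale_mul_saddleIntegral_sub_one).add_const 1
  rw [zero_mul, zero_add] at h
  refine h.congr fun r => ?_
  rw [← mul_assoc, ← Real.exp_add, neg_add_cancel, Real.exp_zero, one_mul, sub_add_cancel]

end SaddlePoint

section Bell

theorem Bell_succ (n : ℕ) : Bell (n + 1) = ∑ k ∈ Finset.range (n + 1), n.choose k * Bell k := by
  rw [Bell, Finset.sum_attach (Finset.range (n + 1)) (fun k => n.choose k * Bell k)]

theorem iteratedDeriv_cexp_cexp_sub_one_zero (n : ℕ) :
    iteratedDeriv n (fun z => cexp (cexp z - 1)) 0 = Bell n := by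
  have hsmooth {k : WithTop ℕ∞} : ContDiff ℂ k fun z => cexp (cexp z - 1) :=
    (contDiff_exp.sub contDiff_const).cexp
  have hderiv : deriv (fun z => cexp (cexp z - 1)) = (fun z => cexp (cexp z - 1)) * cexp :=
    funext fun z => ((hasDerivAt_exp z).sub_const 1).cexp.deriv
  induction n using Nat.strong_induction_on with
  | _ n ih =>
    rcases n with _ | n
    · simp [Bell]
    · rw [iteratedDeriv_succ', hderiv,
        iteratedDeriv_mul hsmooth.contDiffAt contDiff_exp.contDiffAt, Bell_succ, Nat.cast_sum]
      refine Finset.sum_congr rfl fun k hk => ?_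
      rw [ih k (Finset.mem_range.1 hk)]
      simp [iteratedDeriv_eq_iterate, iter_deriv_exp]

theorem Bell_eq_saddleIntegral {n : ℕ} {r : ℝ} (hr : 0 < r) (hrn : r * rexp r = n) :
    2 * π * r ^ n / n ! * Bell n = rexp (rexp r - 1) * saddleIntegral r := by
  have hdiff : Differentiable ℂ fun z => cexp (cexp z - 1) := by fun_prop
  have cauchy := integral_cexp_neg_smul_circleMap hr hdiff.diffContOnCl n
  have integrand (θ : ℝ) : cexp (-(n * θ * I)) * cexp (cexp (circleMap 0 r θ) - 1)
      = (rexp (rexp r - 1) : ℝ) * cexp (saddleExponent r θ) := by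
    rw [ofReal_exp, ← Complex.exp_add, ← Complex.exp_add, saddleExponent, hrn]
    congr 1
    push_cast
    ring
  have hint : IntervalIntegrable (fun θ => cexp (saddleExponent r θ)) volume (-π) π :=
    (continuous_saddleExponent r).cexp.intervalIntegrable _ _
  simp only [smul_eq_mul, integrand, intervalIntegral.integral_const_mul,
    iteratedDeriv_cexp_cexp_sub_one_zero] at cauchy
  have cauchy_re := congrArg re cauchy
  rw [re_ofReal_mul, ← reCLM_apply, ← reCLM.intervalIntegral_comp_comm hint] at cauchy_re
  simp only [reCLM_apply] at cauchy_re
  rw [saddleIntegral, cauchy_re]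
  norm_cast

theorem Bell_div_Estar {n : ℕ} (hn : n ≠ 0) :
    Bell n / Estar n = Stirling.stirlingSeq n / √π *
      (saddleScale (lambertW n) * saddleIntegral (lambertW n) / √(2 * π)) := by
  have hn₀ : (0 : ℝ) < n := by exact_mod_cast Nat.pos_of_ne_zero hn
  have hr := lambertW_pos hn₀
  have hrn := lambertW_mul_exp hn₀.le
  have bell := Bell_eq_saddleIntegral hr hrn
  rw [Estar]
  set r := lambertW n
  have hBell : (Bell n : ℝ)
      = n ! / (2 * π * r ^ n) * (rexp (rexp r - 1) * saddleIntegral r) := by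
    rw [← bell]; field_simp
  have hscale : saddleScale r = √n * √(1 + r) := by
    rw [saddleScale, ← Real.sqrt_mul hn₀.le, ← hrn]; congr 1; ring
  have hEstar : rexp (rexp r + n * r - (n + 1)) = rexp (rexp r - 1) * (n / rexp 1) ^ n / r ^ n := by
    rw [← hrn, div_pow, mul_pow, hrn, ← Real.exp_nat_mul, ← Real.exp_nat_mul, mul_div_assoc,
      mul_div_assoc, mul_div_cancel_left₀ _ (by positivity), ← Real.exp_sub, ← Real.exp_add]
    congr 1; ring
  have hπ : 2 * π = √2 * √2 * (√π * √π) := by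
    rw [Real.mul_self_sqrt two_pos.le, Real.mul_self_sqrt Real.pi_nonneg]
  rw [hBell, hscale, hEstar, Stirling.stirlingSeq, Real.sqrt_mul two_pos.le,
    Real.sqrt_mul two_pos.le, hπ]
  field_simp

end Bell

theorem stmt_5 :
    Filter.Tendsto (fun n : ℕ => ((n : ℝ) / Real.log n) * ((Bell n : ℝ) / Estar n - 1))
      Filter.atTop (nhds (-1 / 12)) := by
  have hcast := tendsto_natCast_atTop_atTop (R := ℝ)
  have hW := tendsto_lambertW_atTop.comp hcast
  have stirling : Tendsto
      (fun n : ℕ => n * (Stirling.stirlingSeq n / √π - 1) * (Real.log n)⁻¹) atTop (𝓝 0) := by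
    have bound := (eventually_ne_atTop 0).mono fun _ => mul_stirlingSeq_div_sqrt_pi_sub_one_mem_Icc
    exact bdd_le_mul_tendsto_zero (bound.mono fun _ h => h.1) (bound.mono fun _ h => h.2)
      (Real.tendsto_log_atTop.comp hcast).inv_tendsto_atTop
  -- For the Stirling factor `S` and saddle point factor `Q` of `Bₙ / Eₙ*`,
  -- `n (S Q - 1) = n (S - 1) Q + W(n) e^{W(n)} (Q - 1)`.
  have saddle := (stirling.mul (tendsto_saddleScale_mul_saddleIntegral.comp hW)).add
    ((tendsto_lambertW_div_log.comp hcast).mul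
      (tendsto_exp_mul_saddleScale_mul_saddleIntegral_sub_one.comp hW))
  rw [zero_mul, zero_add, one_mul] at saddle
  refine saddle.congr' ?_
  filter_upwards [eventually_ne_atTop 0] with n hn
  have hn' : (n : ℝ) = lambertW n * rexp (lambertW n) := (lambertW_mul_exp n.cast_nonneg).symm
  simp only [Function.comp_apply, Bell_div_Estar hn]
  linear_combination ((1 - saddleScale (lambertW n) * saddleIntegral (lambertW n) / √(2 * π)) *
    (Real.log n)⁻¹) * hn'
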